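/- Let c₁, c₂ ≥ 0 and γ ∈ (0, 1), and set β_i = (9/(2π³))·γ/i² for i ≥ 1. Define a real sequence by C(0) = 0 and C(i) = 3·C(i−1) + c₁·log₂(1/β_i) + c₂ for i ≥ 1. Then for every t ≥ 1, C(t) ≤ 3^t·(2.4·c₁ + (c₁/2)·log₂(1/γ) + c₂/2). -/

import Mathlib

/-!
The two elementary estimates `2π³/9 ≤ 8` and `i ≤ 2 ^ (i - 1)` give
`log₂(1/β_i) ≤ 3 + 2(i - 1) + L = 2i + 1 + L`, where `L = log₂(1/γ) ≥ 0`. The recursion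
`x_i = 3 x_{i-1} + c₁(2i + 1 + L) + c₂` with `x_0 = 0` has the closed-form solution
`x_t = 3^t (2c₁ + c₁L/2 + c₂/2) - (c₁(t + 2) + c₁L/2 + c₂/2)`,
which therefore dominates `C t`; the subtracted term is nonnegative and `2 ≤ 2.4`.
-/

open Real

lemma logb_one_div_beta_le (γ : ℝ) (hγ : 0 < γ) (n : ℕ) :
    Real.logb 2 (1 / ((9 / (2 * π ^ 3)) * γ / ((n + 1 : ℕ) : ℝ) ^ 2))
      ≤ 2 * n + 3 + Real.logb 2 (1 / γ) := by
  have hpi := Real.pi_pos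
  have hn : (0 : ℝ) < ((n + 1 : ℕ) : ℝ) := by positivity
  have hsplit : 1 / ((9 / (2 * π ^ 3)) * γ / ((n + 1 : ℕ) : ℝ) ^ 2)
      = (2 * π ^ 3 / 9) * ((n + 1 : ℕ) : ℝ) ^ 2 * (1 / γ) := by
    field_simp
  have hpi8 : 2 * π ^ 3 / 9 ≤ 8 := by
    have h : π ^ 3 ≤ 3.15 ^ 3 := by
      gcongr
      exact Real.pi_lt_d2.le
    norm_num at h
    linarith
  have hn2 : ((n + 1 : ℕ) : ℝ) ≤ 2 ^ n := by
    exact_mod_cast Nat.lt_two_pow_self (n := n)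
  have hbound : (2 * π ^ 3 / 9) * ((n + 1 : ℕ) : ℝ) ^ 2 ≤ (2 : ℝ) ^ (2 * n + 3) := by
    calc (2 * π ^ 3 / 9) * ((n + 1 : ℕ) : ℝ) ^ 2 ≤ 8 * (2 ^ n) ^ 2 := by gcongr
      _ = (2 : ℝ) ^ (2 * n + 3) := by ring
  have hlog : Real.logb 2 ((2 * π ^ 3 / 9) * ((n + 1 : ℕ) : ℝ) ^ 2) ≤ 2 * n + 3 := by
    rw [Real.logb_le_iff_le_rpow (by norm_num) (by positivity)]
    exact_mod_cast hbound
  rw [hsplit, Real.logb_mul (by positivity) (by positivity)]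
  linarith

/-- Let c₁, c₂ ≥ 0 and γ ∈ (0, 1), and set β_i = (9/(2π³))·γ/i² for i ≥ 1.
If C(0) = 0 and C(i) = 3·C(i−1) + c₁·log₂(1/β_i) + c₂ for i ≥ 1, then for every
t ≥ 1, C(t) ≤ 3^t·(2.4·c₁ + (c₁/2)·log₂(1/γ) + c₂/2). -/
theorem cost_recursion_bound (c₁ c₂ γ : ℝ) (hc₁ : 0 ≤ c₁) (hc₂ : 0 ≤ c₂)
    (hγ : γ ∈ Set.Ioo 0 1)
    (β : ℕ → ℝ) (hβ : ∀ i : ℕ, 1 ≤ i → β i = (9 / (2 * π ^ 3)) * γ / (i : ℝ) ^ 2)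
    (C : ℕ → ℝ) (hC0 : C 0 = 0)
    (hC : ∀ i : ℕ, 1 ≤ i → C i = 3 * C (i - 1) + c₁ * Real.logb 2 (1 / β i) + c₂) :
    ∀ t : ℕ, 1 ≤ t →
      C t ≤ 3 ^ t * (2.4 * c₁ + (c₁ / 2) * Real.logb 2 (1 / γ) + c₂ / 2) := by
  obtain ⟨hγ0, hγ1⟩ := hγ
  have hL : 0 ≤ Real.logb 2 (1 / γ) :=
    Real.logb_nonneg (by norm_num) (by rw [le_div_iff₀ hγ0]; linarith)
  set L := Real.logb 2 (1 / γ) with hLdef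
  have key : ∀ t : ℕ, C t ≤ 3 ^ t * (2 * c₁ + (c₁ / 2) * L + c₂ / 2)
      - (c₁ * (t + 2) + (c₁ / 2) * L + c₂ / 2) := by
    intro t
    induction t with
    | zero => rw [hC0]; apply le_of_eq; push_cast; ring
    | succ n ih =>
      have hlog := logb_one_div_beta_le γ hγ0 n
      rw [← hβ (n + 1) (by omega), ← hLdef] at hlog
      have hmul := mul_le_mul_of_nonneg_left hlog hc₁
      rw [hC (n + 1) (by omega), Nat.add_sub_cancel, pow_succ]
      push_cast
      linarith
  intro t _
  have hcL : 0 ≤ c₁ * L := mul_nonneg hc₁ hL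
  have hct : 0 ≤ c₁ * ((t : ℝ) + 2) := by positivity
  have h3 : 0 ≤ (3 : ℝ) ^ t * c₁ := by positivity
  have := key t
  linarith
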